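/- Every minimal Enriques diagram D with cod(D) ≤ 10 satisfies the two inequalities μ(D) − 1 ≤ cod(D) and deg(D) ≤ 3·cod(D). -/

import Mathlib

open Classical Finset

/-- The raw data of a finite weighted forest equipped with a proximity relation.
The vertices are the elements of `Fin n`; `parent v` is the immediate predecessor of `v`
(`none` iff `v` is a root); `wt v` is the weight of `v`; and `prox a b` means
that `a` is proximate to `b`. -/
structure PreDiagram where
  n : ℕ
  parent : Fin n → Option (Fin n)
  wt : Fin n → ℕ
  prox : Fin n → Fin n → Prop

namespace PreDiagram

variable (D : PreDiagram)

/-- `a` is the immediate predecessor of `b`. -/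
def ImPred (a b : Fin D.n) : Prop := D.parent b = some a

/-- `a` is a predecessor of `b` (reflexive-transitive closure of `ImPred`). -/
def Pred (a b : Fin D.n) : Prop := Relation.ReflTransGen D.ImPred a b

/-- `a` is a proper predecessor of `b`. -/
def ProperPred (a b : Fin D.n) : Prop := Relation.TransGen D.ImPred a b

/-- `a` is a remote predecessor of `b`: a proper but not immediate predecessor. -/
def RemotePred (a b : Fin D.n) : Prop := D.ProperPred a b ∧ ¬ D.ImPred a b

def IsRoot (v : Fin D.n) : Prop := D.parent v = none

/-- A leaf is a vertex with no proper successor. -/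
def IsLeaf (v : Fin D.n) : Prop := ∀ w, ¬ D.ImPred v w

/-- `a` is remotely proximate to `b`: proximate to `b`, and `b` is a remote predecessor. -/
def RemoteProx (a b : Fin D.n) : Prop := D.prox a b ∧ D.RemotePred b a

/-- A satellite is a vertex proximate to a remote predecessor. -/
def IsSatellite (v : Fin D.n) : Prop := ∃ t, D.RemoteProx v t

/-- A free vertex is one that is not a satellite. -/
def IsFree (v : Fin D.n) : Prop := ¬ D.IsSatellite v

/-- The laws of a minimal Enriques diagram. -/
structure IsMED : Prop where
  /-- The graph is a forest: no vertex is a proper predecessor of itself. -/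
  forest : ∀ v, ¬ D.ProperPred v v
  /-- Every weight is at least `1`. -/
  wt_pos : ∀ v, 1 ≤ D.wt v
  /-- Law of Proximity: a root is proximate to no vertex. -/
  root_not_prox : ∀ v, D.IsRoot v → ∀ w, ¬ D.prox v w
  /-- Law of Proximity: a non-root is proximate to its immediate predecessor. -/
  prox_parent : ∀ v u, D.parent v = some u → D.prox v u
  /-- Law of Proximity: any other vertex a non-root is proximate to is a remote predecessor. -/
  prox_remote : ∀ v u w, D.parent v = some u → D.prox v w → w ≠ u → D.RemotePred w v
  /-- Law of Proximity: a non-root is proximate to at most one vertex other than its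
  immediate predecessor. -/
  prox_unique : ∀ v u w w', D.parent v = some u → D.prox v w → D.prox v w' →
      w ≠ u → w' ≠ u → w = w'
  /-- Law of Proximity: if `a` is proximate to `b` and `c` lies properly between them,
  then `c` is proximate to `b`. -/
  prox_between : ∀ a b c, D.prox a b → D.ProperPred b c → D.ProperPred c a → D.prox c b
  /-- Proximity Inequality. -/
  prox_ineq : ∀ v, ∑ w ∈ univ.filter (fun w => D.prox w v), D.wt w ≤ D.wt v
  /-- Law of Succession: a vertex `v` has at most `wt v` immediate successors. -/
  succ_card : ∀ v, (univ.filter (fun w => D.ImPred v w)).card ≤ D.wt v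
  /-- Law of Succession: at most two immediate successors are satellites. -/
  succ_sat : ∀ v w₁ w₂ w₃, D.ImPred v w₁ → D.ImPred v w₂ → D.ImPred v w₃ →
      D.IsSatellite w₁ → D.IsSatellite w₂ → D.IsSatellite w₃ →
      w₁ ≠ w₂ → w₁ ≠ w₃ → w₂ ≠ w₃ → False
  /-- Law of Succession: two distinct immediate successors of the same vertex cannot be
  satellites of the same vertex. -/
  succ_sat_diff : ∀ v w₁ w₂ t, D.ImPred v w₁ → D.ImPred v w₂ → w₁ ≠ w₂ →
      D.RemoteProx w₁ t → D.RemoteProx w₂ t → False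
  /-- Law of Minimality: every leaf of weight `1` is a satellite. -/
  minimal : ∀ v, D.IsLeaf v → D.wt v = 1 → D.IsSatellite v

/-- The number of roots. -/
noncomputable def rts : ℕ := (univ.filter (fun v => D.IsRoot v)).card

/-- The number of free vertices. -/
noncomputable def frs : ℕ := (univ.filter (fun v => D.IsFree v)).card

/-- `dim D = rts D + frs D`. -/
noncomputable def dimD : ℕ := D.rts + D.frs

/-- `deg D = Σ_V C(m_V + 1, 2)`. -/
def degD : ℕ := ∑ v, (D.wt v + 1).choose 2

/-- `cod D = deg D - dim D`. -/
noncomputable def cod : ℤ := (D.degD : ℤ) - (D.dimD : ℤ)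

/-- `δ(D) = Σ_V C(m_V, 2)`. -/
def deltaD : ℕ := ∑ v, (D.wt v).choose 2

/-- `r(D) = Σ_V (m_V - Σ_{W ≻ V} m_W)`. -/
noncomputable def rCh : ℤ :=
  ∑ v, ((D.wt v : ℤ) - ∑ w ∈ univ.filter (fun w => D.prox w v), (D.wt w : ℤ))

/-- `μ(D) = 2 δ(D) - r(D) + rts D`. -/
noncomputable def mu : ℤ := 2 * (D.deltaD : ℤ) - D.rCh + (D.rts : ℤ)

/-- An isomorphism of diagrams: a weight-preserving bijection of the vertices preserving
the immediate-predecessor and proximity relations. -/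
structure Iso (D₁ D₂ : PreDiagram) where
  toEquiv : Fin D₁.n ≃ Fin D₂.n
  wt_eq : ∀ v, D₂.wt (toEquiv v) = D₁.wt v
  imPred_iff : ∀ a b, D₂.ImPred (toEquiv a) (toEquiv b) ↔ D₁.ImPred a b
  prox_iff : ∀ a b, D₂.prox (toEquiv a) (toEquiv b) ↔ D₁.prox a b

def Isomorphic (D₁ D₂ : PreDiagram) : Prop := Nonempty (Iso D₁ D₂)

/-- A realization of `D'` as a subdiagram of `D`: an injection of the vertices such that
the weight of a vertex of `D'` is at most its weight in `D`, and the succession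
(predecessor) and proximity relations of `D'` are the ones induced from `D`. -/
structure Subdiagram (D' D : PreDiagram) where
  toFun : Fin D'.n → Fin D.n
  inj : Function.Injective toFun
  wt_le : ∀ v, D'.wt v ≤ D.wt (toFun v)
  pred_iff : ∀ a b, D'.Pred a b ↔ D.Pred (toFun a) (toFun b)
  prox_iff : ∀ a b, D'.prox a b ↔ D.prox (toFun a) (toFun b)

def IsSubdiagram (D' D : PreDiagram) : Prop := Nonempty (Subdiagram D' D)

/-- The parent function of a chain `0 → 1 → ⋯ → n-1`. -/
def chainParent (n : ℕ) (v : Fin n) : Option (Fin n) :=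
  if v.val = 0 then none
  else some ⟨v.val - 1, lt_of_le_of_lt (Nat.sub_le _ _) v.isLt⟩

/-- The diagram `A_k` (`k ≥ 1`): for `k = 2i-1`, a chain of `i` free vertices of weight `2`;
for `k = 2i`, such a chain followed by a chain of two vertices of weight `1`, both
proximate to the `i`-th weight-`2` vertex. -/
def diagA (k : ℕ) : PreDiagram where
  n := if k % 2 = 0 then k / 2 + 2 else (k + 1) / 2
  parent := chainParent _
  wt := fun v => if v.val < (k + 1) / 2 then 2 else 1
  prox := fun a b => a.val = b.val + 1 ∨
    (k % 2 = 0 ∧ a.val = k / 2 + 1 ∧ b.val + 1 = k / 2)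

/-- The diagram `D_k` (`k ≥ 4`): a root of weight `3`, followed by nothing if `k = 4`,
by two vertices of weight `1` both proximate to the root if `k = 5`, and by the diagram
`A_{k-5}` if `k ≥ 6`. -/
def diagD (k : ℕ) : PreDiagram where
  n := (k - 4) / 2 + (if k % 2 = 0 then 1 else 3)
  parent := chainParent _
  wt := fun v => if v.val = 0 then 3 else if v.val ≤ (k - 4) / 2 then 2 else 1
  prox := fun a b => a.val = b.val + 1 ∨
    (k % 2 = 1 ∧ a.val = (k - 4) / 2 + 2 ∧ b.val = (k - 4) / 2)

/-- The diagram `E_{6l+j}` (`l ≥ 1`, `j ∈ {0,1,2}`), with argument `m = 6l + j`. -/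
def diagE (m : ℕ) : PreDiagram where
  n := m / 6 + (if m % 6 = 1 then 2 else 3)
  parent := chainParent _
  wt := fun v => if v.val < m / 6 then 3 else
    if 1 ≤ m % 6 ∧ v.val = m / 6 then 2 else 1
  prox := fun a b => a.val = b.val + 1 ∨
    (m % 6 = 0 ∧ (a.val = m / 6 + 1 ∨ a.val = m / 6 + 2) ∧ b.val + 1 = m / 6) ∨
    (m % 6 = 1 ∧ a.val = m / 6 + 1 ∧ b.val + 1 = m / 6) ∨
    (m % 6 = 2 ∧ ((a.val = m / 6 + 1 ∧ b.val + 1 = m / 6) ∨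
                  (a.val = m / 6 + 2 ∧ b.val = m / 6)))

/-- The diagram `J_{l,k}` (`l ≥ 2`, `k ≥ 0`): a chain of `l - 1` free vertices of weight `3`
followed by the diagram `D_{k+4}`. -/
def diagJ (l k : ℕ) : PreDiagram where
  n := (l - 1) + k / 2 + (if k % 2 = 0 then 1 else 3)
  parent := chainParent _
  wt := fun v => if v.val ≤ l - 1 then 3 else if v.val ≤ l - 1 + k / 2 then 2 else 1
  prox := fun a b => a.val = b.val + 1 ∨
    (k % 2 = 1 ∧ a.val = (l - 1) + k / 2 + 2 ∧ b.val = (l - 1) + k / 2)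

/-- The diagram `X_{1,0}`: a single root of weight `4`. -/
def diagX10 : PreDiagram where
  n := 1
  parent := chainParent _
  wt := fun _ => 4
  prox := fun a b => a.val = b.val + 1

/-- The diagram `X_{1,1}`: a root of weight `4` followed by a chain of two vertices of
weight `1`, both proximate to the root. -/
def diagX11 : PreDiagram where
  n := 3
  parent := chainParent _
  wt := fun v => if v.val = 0 then 4 else 1
  prox := fun a b => a.val = b.val + 1 ∨ (a.val = 2 ∧ b.val = 0)

/-- The diagram `X_{1,2}`: a root of weight `4` followed by one free vertex of weight `2`. -/
def diagX12 : PreDiagram where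
  n := 2
  parent := chainParent _
  wt := fun v => if v.val = 0 then 4 else 2
  prox := fun a b => a.val = b.val + 1

/-- The diagram `Z_{11}`: a root of weight `4` followed by a chain of three vertices of
weight `1`, all proximate to the root. -/
def diagZ11 : PreDiagram where
  n := 4
  parent := chainParent _
  wt := fun v => if v.val = 0 then 4 else 1
  prox := fun a b => a.val = b.val + 1 ∨ ((a.val = 2 ∨ a.val = 3) ∧ b.val = 0)

/-- The diagram `Y_{1,1}`: a root of weight `4` with two immediate free successors of
weight `1`, each of which has one immediate successor of weight `1` that is remotely
proximate to the root. -/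
def diagY11 : PreDiagram where
  n := 5
  parent := fun v =>
    if v.val = 0 then none
    else if v.val ≤ 2 then some ⟨0, by omega⟩
    else if v.val = 3 then some ⟨1, by omega⟩
    else some ⟨2, by omega⟩
  wt := fun v => if v.val = 0 then 4 else 1
  prox := fun a b => (a.val = 1 ∧ b.val = 0) ∨ (a.val = 2 ∧ b.val = 0) ∨
    (a.val = 3 ∧ (b.val = 1 ∨ b.val = 0)) ∨ (a.val = 4 ∧ (b.val = 2 ∨ b.val = 0))

/-- The disjoint union of two diagrams. -/
def disjUnion (D₁ D₂ : PreDiagram) : PreDiagram where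
  n := D₁.n + D₂.n
  parent := fun v =>
    if h : v.val < D₁.n then
      (D₁.parent ⟨v.val, h⟩).map
        (fun w => ⟨w.val, Nat.lt_of_lt_of_le w.isLt (Nat.le_add_right _ _)⟩)
    else
      (D₂.parent ⟨v.val - D₁.n, by have := v.isLt; omega⟩).map
        (fun w => ⟨D₁.n + w.val, by have := w.isLt; omega⟩)
  wt := fun v =>
    if h : v.val < D₁.n then D₁.wt ⟨v.val, h⟩
    else D₂.wt ⟨v.val - D₁.n, by have := v.isLt; omega⟩
  prox := fun a b =>
    (∃ (ha : a.val < D₁.n) (hb : b.val < D₁.n), D₁.prox ⟨a.val, ha⟩ ⟨b.val, hb⟩) ∨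
    (∃ (_ : D₁.n ≤ a.val) (_ : D₁.n ≤ b.val),
      D₂.prox ⟨a.val - D₁.n, by have := a.isLt; omega⟩
              ⟨b.val - D₁.n, by have := b.isLt; omega⟩)

end PreDiagram

namespace PreDiagram

variable {D : PreDiagram}

/-- local contribution to the dimension -/
noncomputable def locDim (D : PreDiagram) (v : Fin D.n) : ℤ :=
  (if D.IsRoot v then 1 else 0) + (if D.IsFree v then 1 else 0)

/-- local contribution to the codimension -/
noncomputable def locCod (D : PreDiagram) (v : Fin D.n) : ℤ :=
  ((D.wt v + 1).choose 2 : ℤ) - D.locDim v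

/-- the number of vertices to which `v` is proximate -/
noncomputable def numProx (D : PreDiagram) (v : Fin D.n) : ℕ :=
  (univ.filter (fun w => D.prox v w)).card

/-- local contribution to `mu - cod` -/
noncomputable def locExc (D : PreDiagram) (v : Fin D.n) : ℤ :=
  2 * ((D.wt v).choose 2 : ℤ) - D.wt v + D.wt v * D.numProx v
    + (if D.IsRoot v then 1 else 0) - D.locCod v

theorem dim_eq : (D.dimD : ℤ) = ∑ v, D.locDim v := by
  unfold dimD rts frs locDim
  rw [Finset.sum_add_distrib]
  push_cast
  simp

theorem cod_eq : D.cod = ∑ v, D.locCod v := by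
  unfold cod locCod
  rw [Finset.sum_sub_distrib, dim_eq, degD]
  push_cast
  rfl

theorem rCh_eq : D.rCh = ∑ v, ((D.wt v : ℤ) - D.wt v * D.numProx v) := by
  unfold rCh
  rw [Finset.sum_sub_distrib, Finset.sum_sub_distrib]
  congr 1
  simp_rw [Finset.sum_filter]
  rw [Finset.sum_comm]
  refine Finset.sum_congr rfl fun v _ => ?_
  rw [← Finset.sum_filter, Finset.sum_const, numProx, nsmul_eq_mul, mul_comm]

theorem mu_sub_cod : D.mu - D.cod = ∑ v, D.locExc v := by
  have h : (D.rts : ℤ) = ∑ v, (if D.IsRoot v then (1 : ℤ) else 0) := by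
    unfold rts; simp
  unfold mu
  rw [cod_eq, rCh_eq, h, deltaD]
  push_cast
  rw [Finset.mul_sum, ← Finset.sum_sub_distrib, ← Finset.sum_add_distrib,
    ← Finset.sum_sub_distrib]
  refine Finset.sum_congr rfl fun v _ => ?_
  unfold locExc
  ring

theorem wt_child_le (hD : D.IsMED) {u v : Fin D.n} (h : D.ImPred u v) : D.wt v ≤ D.wt u := by
  refine le_trans ?_ (hD.prox_ineq u)
  exact Finset.single_le_sum (f := D.wt) (fun _ _ => Nat.zero_le _)
    (by simpa using hD.prox_parent v u h)

theorem two_prox_le (hD : D.IsMED) {a b t : Fin D.n} (hab : a ≠ b) (ha : D.prox a t)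
    (hb : D.prox b t) : D.wt a + D.wt b ≤ D.wt t := by
  refine le_trans ?_ (hD.prox_ineq t)
  rw [← Finset.sum_pair hab]
  refine Finset.sum_le_sum_of_subset ?_
  intro x hx
  simp only [Finset.mem_insert, Finset.mem_singleton] at hx
  rcases hx with rfl | rfl <;> simpa

theorem imPred_ne (hD : D.IsMED) {u v : Fin D.n} (h : D.ImPred u v) : u ≠ v := by
  rintro rfl
  exact hD.forest u (Relation.TransGen.single h)

theorem wf_down (hD : D.IsMED) : WellFounded D.ProperPred := by
  have : IsTrans _ D.ProperPred := ⟨fun _ _ _ h h' => Relation.TransGen.trans h h'⟩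
  have : Std.Irrefl D.ProperPred := ⟨hD.forest⟩
  exact Finite.wellFounded_of_trans_of_irrefl _

theorem wf_up (hD : D.IsMED) : WellFounded (fun a b => D.ProperPred b a) := by
  have : IsTrans _ (fun a b => D.ProperPred b a) :=
    ⟨fun _ _ _ h h' => Relation.TransGen.trans h' h⟩
  have : Std.Irrefl (fun a b => D.ProperPred b a) := ⟨hD.forest⟩
  exact Finite.wellFounded_of_trans_of_irrefl _

theorem exists_root (hD : D.IsMED) (v : Fin D.n) : ∃ r, D.IsRoot r ∧ D.wt v ≤ D.wt r := by
  induction v using (wf_down hD).induction with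
  | _ v ih =>
    by_cases hv : D.IsRoot v
    · exact ⟨v, hv, le_rfl⟩
    · obtain ⟨u, hu⟩ := Option.ne_none_iff_exists'.1 hv
      obtain ⟨r, hr, hr'⟩ := ih u (Relation.TransGen.single hu)
      exact ⟨r, hr, (wt_child_le hD hu).trans hr'⟩

/-- A satellite's parent is also proximate to the remote vertex. -/
theorem sat_parent {u v t : Fin D.n} (h : D.ImPred u v) (hs : D.RemoteProx v t) :
    t ≠ u ∧ D.ProperPred t u := by
  obtain ⟨_, h1, h2⟩ := hs
  refine ⟨fun e => h2 (e ▸ h), ?_⟩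
  rcases Relation.TransGen.tail'_iff.1 h1 with ⟨c, hc, hcv⟩
  have : c = u := by
    unfold ImPred at h hcv
    rw [h] at hcv
    exact (Option.some.inj hcv).symm
  subst this
  rcases Relation.reflTransGen_iff_eq_or_transGen.1 hc with e | e
  · exact absurd (e ▸ h) h2
  · exact e

theorem sat_parent_prox (hD : D.IsMED) {u v t : Fin D.n} (h : D.ImPred u v)
    (hs : D.RemoteProx v t) : D.prox u t :=
  hD.prox_between v t u hs.1 (sat_parent h hs).2 (Relation.TransGen.single h)

theorem sat_not_root (hD : D.IsMED) {v : Fin D.n} (h : D.IsSatellite v) : ¬ D.IsRoot v := by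
  obtain ⟨t, ht⟩ := h
  exact fun hr => hD.root_not_prox v hr t ht.1

theorem sat_wt (hD : D.IsMED) {v : Fin D.n} (h : D.IsSatellite v) :
    ∃ t, 2 * D.wt v ≤ D.wt t := by
  obtain ⟨u, hu⟩ := Option.ne_none_iff_exists'.1 (sat_not_root hD h)
  obtain ⟨t, ht⟩ := h
  have h1 := two_prox_le hD (imPred_ne hD hu) (sat_parent_prox hD hu ht) ht.1
  have h2 := wt_child_le hD hu
  exact ⟨t, by omega⟩

theorem free_one (hD : D.IsMED) (v : Fin D.n) : D.IsFree v → D.wt v = 1 →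
    ∃ w, D.ImPred v w ∧ D.IsSatellite w := by
  induction v using (wf_up hD).induction with
  | _ v ih =>
    intro hf hv
    have hl : ¬ D.IsLeaf v := fun hl => hf (hD.minimal v hl hv)
    unfold IsLeaf at hl
    push Not at hl
    obtain ⟨w, hw⟩ := hl
    refine ⟨w, hw, ?_⟩
    by_contra hws
    have hw1 : D.wt w = 1 := le_antisymm (hv ▸ wt_child_le hD hw) (hD.wt_pos w)
    obtain ⟨x, hx, t, ht⟩ := ih w (Relation.TransGen.single hw) hws hw1
    have hwt := sat_parent_prox hD hx ht
    by_cases e : t = v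
    · subst e
      have := two_prox_le hD (imPred_ne hD hx) hwt ht.1
      have := hD.wt_pos x
      omega
    · exact hws ⟨t, hwt, hD.prox_remote w v t hw hwt e⟩

theorem root_wt (hD : D.IsMED) {v : Fin D.n} (h : D.IsRoot v) : 2 ≤ D.wt v := by
  by_contra hlt
  have h1 : D.wt v = 1 := by have := hD.wt_pos v; omega
  have hf : D.IsFree v := fun hs => sat_not_root hD hs h
  obtain ⟨w, hw, t, ht⟩ := free_one hD v hf h1
  exact hD.root_not_prox v h t (sat_parent_prox hD hw ht)

theorem numProx_root (hD : D.IsMED) {v : Fin D.n} (h : D.IsRoot v) : D.numProx v = 0 := by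
  unfold numProx
  rw [Finset.card_eq_zero, Finset.filter_eq_empty_iff]
  exact fun w _ => hD.root_not_prox v h w

theorem numProx_le_two (hD : D.IsMED) {v : Fin D.n} (h : ¬ D.IsRoot v) : D.numProx v ≤ 2 := by
  obtain ⟨u, hu⟩ := Option.ne_none_iff_exists'.1 h
  unfold numProx
  have h1 : ((univ.filter (fun w => D.prox v w)).erase u).card ≤ 1 := by
    rw [Finset.card_le_one]
    intro a ha b hb
    simp only [Finset.mem_erase, Finset.mem_filter, Finset.mem_univ, true_and] at ha hb
    exact hD.prox_unique v u a b hu ha.2 hb.2 ha.1 hb.1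
  have h2 := Finset.pred_card_le_card_erase (s := univ.filter (fun w => D.prox v w)) (a := u)
  omega

theorem numProx_le_one (hD : D.IsMED) {v : Fin D.n} (h : ¬ D.IsRoot v) (hf : D.IsFree v) :
    D.numProx v ≤ 1 := by
  obtain ⟨u, hu⟩ := Option.ne_none_iff_exists'.1 h
  unfold numProx
  have h1 : univ.filter (fun w => D.prox v w) ⊆ {u} := by
    intro a ha
    simp only [Finset.mem_filter, Finset.mem_univ, true_and, Finset.mem_singleton] at ha ⊢
    by_contra hne
    exact hf ⟨a, ha, hD.prox_remote v u a hu ha hne⟩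
  simpa using Finset.card_le_card h1

theorem vertex_cases (hD : D.IsMED) (v : Fin D.n) :
    (D.IsRoot v ∧ D.IsFree v ∧ 2 ≤ D.wt v ∧ D.locCod v = ((D.wt v + 1).choose 2 : ℤ) - 2 ∧
      D.locExc v = 2 * ((D.wt v).choose 2 : ℤ) - D.wt v + 1 - D.locCod v) ∨
    (¬ D.IsRoot v ∧ D.IsFree v ∧ 1 ≤ D.wt v ∧ D.locCod v = ((D.wt v + 1).choose 2 : ℤ) - 1 ∧
      D.locExc v ≤ 2 * ((D.wt v).choose 2 : ℤ) - D.locCod v) ∨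
    (¬ D.IsRoot v ∧ ¬ D.IsFree v ∧ 1 ≤ D.wt v ∧ D.locCod v = ((D.wt v + 1).choose 2 : ℤ) ∧
      D.locExc v ≤ 2 * ((D.wt v).choose 2 : ℤ) + D.wt v - D.locCod v) := by
  by_cases hr : D.IsRoot v
  · have hf : D.IsFree v := fun hs => sat_not_root hD hs hr
    refine Or.inl ⟨hr, hf, root_wt hD hr, ?_, ?_⟩
    · simp [locCod, locDim, hr, hf]
    · simp [locExc, hr, numProx_root hD hr]
  · by_cases hf : D.IsFree v
    · refine Or.inr (Or.inl ⟨hr, hf, hD.wt_pos v, ?_, ?_⟩)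
      · simp [locCod, locDim, hr, hf]
      · have : (D.numProx v : ℤ) ≤ 1 := by exact_mod_cast numProx_le_one hD hr hf
        simp only [locExc, hr, if_false]
        nlinarith [(Nat.cast_nonneg (D.wt v) : (0 : ℤ) ≤ D.wt v)]
    · refine Or.inr (Or.inr ⟨hr, hf, hD.wt_pos v, ?_, ?_⟩)
      · simp [locCod, locDim, hr, hf]
      · have : (D.numProx v : ℤ) ≤ 2 := by exact_mod_cast numProx_le_two hD hr
        simp only [locExc, hr, if_false]
        nlinarith [(Nat.cast_nonneg (D.wt v) : (0 : ℤ) ≤ D.wt v)]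

theorem choose_lower {k m q : ℕ} (h : k ≤ m) (hq : (k + 1).choose 2 = q) :
    (q : ℤ) ≤ ((m + 1).choose 2 : ℕ) := by
  rw [← hq]
  exact_mod_cast Nat.choose_le_choose 2 (by omega)

theorem locCod_nonneg (hD : D.IsMED) (v : Fin D.n) : 0 ≤ D.locCod v := by
  rcases vertex_cases hD v with ⟨_, _, h, hc, _⟩ | ⟨_, _, h, hc, _⟩ | ⟨_, _, h, hc, _⟩
  · have := choose_lower (q := 3) h rfl
    norm_num at this
    omega
  · have := choose_lower (q := 1) h rfl
    norm_num at this
    omega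
  · omega

theorem locExc_small (hD : D.IsMED) (v : Fin D.n) (h : D.locCod v ≤ 2) : D.locExc v ≤ 0 := by
  have h3 : D.wt v < 3 := by
    by_contra hlt
    have := choose_lower (q := 6) (not_lt.1 hlt) rfl
    norm_num at this
    rcases vertex_cases hD v with ⟨_, _, _, hc, _⟩ | ⟨_, _, _, hc, _⟩ | ⟨_, _, _, hc, _⟩ <;> omega
  have hp := hD.wt_pos v
  rcases vertex_cases hD v with ⟨_, _, h, hc, he⟩ | ⟨_, _, h, hc, he⟩ | ⟨_, _, h, hc, he⟩ <;>
  · generalize D.wt v = m at *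
    interval_cases m <;> norm_num [Nat.choose] at * <;> omega

theorem deg_bound (hD : D.IsMED) : (D.degD : ℤ) ≤ 3 * D.cod := by
  -- weight-one free vertices inject into satellites
  have hcard : (univ.filter (fun v => D.IsFree v ∧ D.wt v = 1)).card ≤
      (univ.filter (fun v => ¬ D.IsFree v)).card := by
    have hch : ∀ v : Fin D.n, ∃ w, (D.IsFree v ∧ D.wt v = 1) → D.ImPred v w ∧ D.IsSatellite w := by
      intro v
      by_cases h : D.IsFree v ∧ D.wt v = 1
      · obtain ⟨w, hw⟩ := free_one hD v h.1 h.2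
        exact ⟨w, fun _ => hw⟩
      · exact ⟨v, fun h' => absurd h' h⟩
    choose f hf using hch
    refine Finset.card_le_card_of_injOn f ?_ ?_
    · intro v hv
      simp only [Finset.coe_filter, Finset.mem_univ, true_and, Set.mem_ofPred_eq] at hv ⊢
      exact fun h => h (hf v hv).2
    · intro a ha b hb hab
      simp only [Finset.coe_filter, Finset.mem_univ, true_and, Set.mem_ofPred_eq] at ha hb
      have h1 : D.parent (f a) = some a := (hf a ha).1
      have h2 : D.parent (f b) = some b := (hf b hb).1
      rw [hab, h2] at h1
      exact (Option.some.inj h1).symm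
  have hsum : ∑ v : Fin D.n, ((if ¬ D.IsFree v then (1 : ℤ) else 0) -
      (if D.IsFree v ∧ D.wt v = 1 then 1 else 0)) ≤
      ∑ v, (3 * D.locCod v - ((D.wt v + 1).choose 2 : ℤ)) := by
    refine Finset.sum_le_sum fun v _ => ?_
    rcases vertex_cases hD v with ⟨_, hf, h, hc, _⟩ | ⟨_, hf, h, hc, _⟩ | ⟨_, hf, h, hc, _⟩
    · have := choose_lower (q := 3) h rfl
      norm_num at this
      have h1 : D.wt v ≠ 1 := by omega
      simp only [hf, h1, hc]
      simp
      omega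
    · by_cases h1 : D.wt v = 1
      · simp [hf, h1, hc]
      · have h2 : 2 ≤ D.wt v := by omega
        have := choose_lower (q := 3) h2 rfl
        norm_num at this
        simp only [hf, h1, hc]
        simp
        omega
    · have := choose_lower (q := 1) h rfl
      norm_num at this
      simp only [hf, hc]
      simp
      omega
  rw [Finset.sum_sub_distrib, Finset.sum_sub_distrib, ← Finset.mul_sum, ← cod_eq,
    Finset.sum_boole, Finset.sum_boole] at hsum
  have hdeg : (D.degD : ℤ) = ∑ v, ((D.wt v + 1).choose 2 : ℤ) := by
    unfold degD; push_cast; rfl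
  rw [hdeg]
  have : ((univ.filter (fun v => D.IsFree v ∧ D.wt v = 1)).card : ℤ) ≤
      (univ.filter (fun v => ¬ D.IsFree v)).card := by exact_mod_cast hcard
  linarith

theorem mu_bound (hD : D.IsMED) (hcod : D.cod ≤ 10) : D.mu - 1 ≤ D.cod := by
  suffices h : ∑ v, D.locExc v ≤ 1 by
    rw [← mu_sub_cod] at h; linarith
  rw [cod_eq] at hcod
  by_cases hbig : ∃ t, 4 ≤ D.wt t
  · obtain ⟨t, ht⟩ := hbig
    obtain ⟨r, hr, htr⟩ := exists_root hD t
    have h4 : 4 ≤ D.wt r := ht.trans htr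
    have hle : D.locCod r ≤ 10 := le_trans
      (Finset.single_le_sum (f := D.locCod) (fun v _ => locCod_nonneg hD v) (Finset.mem_univ r)) hcod
    rcases vertex_cases hD r with ⟨_, _, _, hc, he⟩ | ⟨h, _⟩ | ⟨h, _⟩
    rotate_left
    · exact absurd hr h
    · exact absurd hr h
    have h5 : D.wt r = 4 := by
      by_contra hne
      have h5 : 5 ≤ D.wt r := by omega
      have := choose_lower (q := 15) h5 rfl
      norm_num at this
      omega
    rw [h5] at hc he
    norm_num [Nat.choose] at hc he
    rw [← Finset.add_sum_erase _ _ (Finset.mem_univ r)] at hcod ⊢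
    have hz : ∑ v ∈ univ.erase r, D.locExc v ≤ 0 := by
      refine Finset.sum_nonpos fun v hv => locExc_small hD v ?_
      have := Finset.single_le_sum (f := D.locCod) (fun v _ => locCod_nonneg hD v) hv
      linarith
    linarith
  · push Not at hbig
    have hloc : ∀ v, 0 ≤ D.locCod v - 5 * D.locExc v ∧
        (D.IsRoot v → D.wt v = 3 → 4 ≤ D.locCod v - 5 * D.locExc v) ∧
        (0 < D.locExc v → 3 ≤ D.wt v) := by
      intro v
      have hp := hD.wt_pos v
      have hb := hbig v
      rcases vertex_cases hD v with ⟨hr, hf, h, hc, he⟩ | ⟨hr, hf, h, hc, he⟩ | ⟨hr, hf, h, hc, he⟩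
      · simp only [hr, true_implies]
        generalize D.wt v = m at *
        interval_cases m <;> norm_num [Nat.choose] at hc he ⊢ <;> omega
      · simp only [hr, false_implies, true_and]
        generalize D.wt v = m at *
        interval_cases m <;> norm_num [Nat.choose] at hc he ⊢ <;> omega
      · have h1 : D.wt v = 1 := by
          obtain ⟨t, ht⟩ := sat_wt hD (not_not.1 hf)
          have := hbig t
          omega
        simp only [hr, false_implies, true_and]
        rw [h1] at hc he ⊢
        norm_num [Nat.choose] at hc he ⊢
        omega
    by_contra hgt
    have hpos : 0 < ∑ v, D.locExc v := by linarith
    obtain ⟨v, hv⟩ : ∃ v, 0 < D.locExc v := by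
      by_contra hno
      push Not at hno
      exact absurd (Finset.sum_nonpos fun v _ => hno v) (not_le.2 hpos)
    obtain ⟨r, hr, hvr⟩ := exists_root hD v
    have h3 : D.wt r = 3 := by
      have := (hloc v).2.2 hv
      have := hbig r
      omega
    have h4 := (hloc r).2.1 hr h3
    have h5 := Finset.single_le_sum (f := fun v => D.locCod v - 5 * D.locExc v)
      (fun v _ => (hloc v).1) (Finset.mem_univ r)
    simp only [Finset.sum_sub_distrib, ← Finset.mul_sum] at h5
    linarith

end PreDiagram

open PreDiagram in
/-- Every minimal Enriques diagram `D` with `cod(D) ≤ 10` satisfies `μ(D) - 1 ≤ cod(D)`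
and `deg(D) ≤ 3 · cod(D)` (Display (4.3)). -/
theorem statement13 (D : PreDiagram) (hD : D.IsMED) (hcod : D.cod ≤ 10) :
    D.mu - 1 ≤ D.cod ∧ (D.degD : ℤ) ≤ 3 * D.cod := by
  exact ⟨mu_bound hD hcod, deg_bound hD⟩
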